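/- Let α > 0 and p, q ≥ 2. There exists a constant C ∈ (0,∞), depending only on α, p, q, such that for every locally Lipschitz g : ℝ³ → ℝ supported in {x ∈ ℝ³ : N(x) ≥ 1} one has ∫ |g|^q N^{p−3} e^{−α N^p} dx ≤ C ∫ (|∇g|^q + |g|^q) e^{−α N^p} dx, where ∇ is the Heisenberg sub-gradient (a U-bound for the Kaplan norm). -/

import Mathlib

open MeasureTheory Filter
open scoped ENNReal

noncomputable section

/-- The underlying space `ℝ³` of the Heisenberg group. -/
abbrev Spin3 : Type := Fin 3 → ℝ

/-- The Heisenberg vector field `X¹ = ∂₁ + 2x₂∂₃` applied to `f` at `x`. -/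
def X1 (f : Spin3 → ℝ) (x : Spin3) : ℝ :=
  fderiv ℝ f x (Pi.single 0 1) + 2 * x 1 * fderiv ℝ f x (Pi.single 2 1)

/-- The Heisenberg vector field `X² = ∂₂ − 2x₁∂₃` applied to `f` at `x`. -/
def X2 (f : Spin3 → ℝ) (x : Spin3) : ℝ :=
  fderiv ℝ f x (Pi.single 1 1) - 2 * x 0 * fderiv ℝ f x (Pi.single 2 1)

/-- The length `|∇f|` of the Heisenberg sub-gradient `∇f = (X¹f, X²f)`. -/
def hGrad (f : Spin3 → ℝ) (x : Spin3) : ℝ := Real.sqrt (X1 f x ^ 2 + X2 f x ^ 2)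

/-- The Kaplan norm `N(x) = ((x₁²+x₂²)² + 16x₃²)^{1/4}` on the Heisenberg group. -/
def kaplan (x : Spin3) : ℝ := ((x 0 ^ 2 + x 1 ^ 2) ^ 2 + 16 * x 2 ^ 2) ^ ((1 : ℝ) / 4)

/-!
Let `N` be the Kaplan norm, `r = |(x₁, x₂)|` and `U = ∇(N²) - (x₁, x₂)`. For a radial density
`w(N)`, the divergence of `N^(p-2) w(N) U` has three parts. The derivative of the density gives at
most `-κ z² w` with `z = N^(p-2) r`, by the decay of `w` and the bound `⟪∇N, U⟫ ≥ r² / N`. The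
subtracted field `(x₁, x₂)`, of divergence `2`, gives `-2 N^(p-2) w`; this is what survives on the
vertical axis, where `∇N` degenerates. Everything else is at most a multiple of `z w` on `{N ≥ 1}`.

The divergence of `|g|^q N^(p-2) w(N) U` integrates to zero. The terms linear in `z`, including the
cross term `q |g|^(q-1) |∇g| z w`, are absorbed by `-κ |g|^q z² w` through Young's inequality,
leaving `|g|^q N^(p-2) w` bounded by a multiple of `(|∇g|^q + |g|^q) w`. The density `exp (-α N^p)`
is reached through compactly supported weights obeying the same differential inequality
`w' ≤ -κ N^(p-1) w`.
-/

open scoped RealInnerProductSpace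

section LocallyLipschitz

lemma exists_lipschitzWith_of_hasCompactSupport {X F : Type*} [PseudoMetricSpace X] [ProperSpace X]
    [SeminormedAddCommGroup F] {f : X → F} (hf : LocallyLipschitz f) (hc : HasCompactSupport f) :
    ∃ C, LipschitzWith C f := by
  obtain ⟨K, hK⟩ := (hf.locallyLipschitzOn
    (s := Metric.cthickening 1 (tsupport f))).exists_lipschitzOnWith_of_compact
    hc.isCompact.cthickening
  obtain ⟨B, hB⟩ := hc.exists_bound_of_continuous hf.continuous
  have near : ∀ x y, f x ≠ 0 → dist y x ≤ 1 → y ∈ Metric.cthickening 1 (tsupport f) :=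
    fun x y hx hxy ↦ Metric.mem_cthickening_of_dist_le y x 1 _ (subset_tsupport f hx) hxy
  refine ⟨max K (2 * B).toNNReal, LipschitzWith.of_dist_le_mul fun x y ↦ ?_⟩
  rcases le_or_gt (dist x y) 1 with hxy | hxy
  · by_cases h0 : f x = 0 ∧ f y = 0
    · rw [h0.1, h0.2, dist_self]
      positivity
    · have hmem : x ∈ Metric.cthickening 1 (tsupport f) ∧
          y ∈ Metric.cthickening 1 (tsupport f) := by
        rcases not_and_or.1 h0 with hx | hy
        · exact ⟨near x x hx (by simp), near x y hx (dist_comm x y ▸ hxy)⟩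
        · exact ⟨near y x hy hxy, near y y hy (by simp)⟩
      exact (hK.dist_le_mul x hmem.1 y hmem.2).trans (by gcongr; exact le_max_left _ _)
  · calc dist (f x) (f y) ≤ ‖f x‖ + ‖f y‖ := dist_le_norm_add_norm _ _
      _ ≤ 2 * B := by linarith [hB x, hB y]
      _ ≤ (2 * B).toNNReal * 1 := by rw [mul_one]; exact Real.le_coe_toNNReal _
      _ ≤ ↑(max K (2 * B).toNNReal) * dist x y := by gcongr; exact le_max_right _ _

variable {E F : Type*} [NormedAddCommGroup E] [NormedSpace ℝ E] [NormedAddCommGroup F]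
  [NormedSpace ℝ F]

lemma ae_differentiableAt_of_locallyLipschitz [FiniteDimensional ℝ E] [FiniteDimensional ℝ F]
    [MeasurableSpace E] [BorelSpace E] {μ : Measure E} [μ.IsAddHaarMeasure] {f : E → F}
    (hf : LocallyLipschitz f) : ∀ᵐ x ∂μ, DifferentiableAt ℝ f x := by
  have on_ball (n : ℕ) : ∀ᵐ x ∂μ, x ∈ Metric.ball (0 : E) n → DifferentiableAt ℝ f x := by
    obtain ⟨K, hK⟩ := (hf.locallyLipschitzOn
      (s := Metric.closedBall (0 : E) n)).exists_lipschitzOnWith_of_compact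
      (isCompact_closedBall _ _)
    filter_upwards [(hK.mono Metric.ball_subset_closedBall).ae_differentiableWithinAt_of_mem]
      with x hx hxn
    exact (hx hxn).differentiableAt (Metric.isOpen_ball.mem_nhds hxn)
  filter_upwards [ae_all_iff.2 on_ball] with x hx
  obtain ⟨n, hn⟩ := exists_nat_gt (dist x 0)
  exact hx n hn

lemma locallyLipschitz_smul_of_contDiffAt {f : E → ℝ} {V : E → F} (hf : LocallyLipschitz f)
    (hV : ∀ x ∈ tsupport f, ContDiffAt ℝ 1 V x) : LocallyLipschitz fun x ↦ f x • V x := by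
  intro x
  by_cases hx : x ∈ tsupport f
  · have hsmul : ContDiffAt ℝ 1 (fun z : ℝ × E ↦ z.1 • V z.2) (f x, x) :=
      contDiffAt_fst.smul ((hV x hx).comp (f x, x) contDiffAt_snd)
    obtain ⟨K, t, ht, hK⟩ := hsmul.exists_lipschitzOnWith
    obtain ⟨L, s, hs, hL⟩ := (hf.prodMk LocallyLipschitz.id) x
    have hcont : ContinuousAt (fun y ↦ (f y, id y)) x := by
      have := hf.continuous
      fun_prop
    exact ⟨K * L, s ∩ (fun y ↦ (f y, id y)) ⁻¹' t, inter_mem hs (hcont ht),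
      hK.comp (hL.mono Set.inter_subset_left) fun y hy ↦ hy.2⟩
  · refine ⟨0, {y | f y = 0}, notMem_tsupport_iff_eventuallyEq.1 hx, fun y hy z hz ↦ ?_⟩
    rw [Set.mem_ofPred_eq] at hy hz
    simp [hy, hz]

lemma locallyLipschitz_euclidean_apply {X ι : Type*} [PseudoEMetricSpace X] [Fintype ι]
    {V : X → EuclideanSpace ℝ ι} (hV : LocallyLipschitz V) (i : ι) :
    LocallyLipschitz fun x ↦ V x i :=
  (EuclideanSpace.proj (𝕜 := ℝ) i).lipschitz.locallyLipschitz.comp hV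

lemma hasCompactSupport_euclidean_apply {X ι : Type*} [TopologicalSpace X]
    {V : X → EuclideanSpace ℝ ι} (hV : HasCompactSupport V) (i : ι) :
    HasCompactSupport fun x ↦ V x i :=
  hV.comp_left (g := fun v : EuclideanSpace ℝ ι ↦ v i) rfl

end LocallyLipschitz

section IntegrationByParts

variable {E : Type*} [NormedAddCommGroup E] [NormedSpace ℝ E] [FiniteDimensional ℝ E]
  [MeasurableSpace E] [BorelSpace E] {μ : Measure E} [μ.IsAddHaarMeasure] {f c : E → ℝ}

lemma integrable_mul_fderiv_apply (hf : LocallyLipschitz f) (hfc : HasCompactSupport f)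
    (hc : Continuous c) (v : E) : Integrable (fun x ↦ c x * fderiv ℝ f x v) μ := by
  obtain ⟨K, hK⟩ := exists_lipschitzWith_of_hasCompactSupport hf hfc
  have hsupp : Function.support (fun x ↦ c x * fderiv ℝ f x v) ⊆ tsupport f := by
    refine (Function.support_mul_subset_right _ _).trans fun x hx ↦ support_fderiv_subset ℝ ?_
    rw [Function.mem_support] at hx ⊢
    exact fun h ↦ hx (by rw [h, zero_apply])
  rw [← integrableOn_iff_integrable_of_support_subset hsupp]
  refine IntegrableOn.continuousOn_mul hc.continuousOn ?_ hfc.isCompact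
  refine Measure.integrableOn_of_bounded (M := K * ‖v‖) hfc.isCompact.measure_lt_top.ne
    (measurable_fderiv_apply_const ℝ f v).aestronglyMeasurable (.of_forall fun x ↦ ?_)
  exact (fderiv ℝ f x).le_of_opNorm_le (norm_fderiv_le_of_lipschitz ℝ hK) v

lemma integral_mul_fderiv_apply_eq_zero (hf : LocallyLipschitz f) (hfc : HasCompactSupport f)
    {K : NNReal} (hc : LipschitzWith K c) {v : E} (hcv : ∀ (x : E) (t : ℝ), c (x + t • v) = c x) :
    ∫ x, c x * fderiv ℝ f x v ∂μ = 0 := by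
  obtain ⟨L, hL⟩ := exists_lipschitzWith_of_hasCompactSupport hf hfc
  have hderiv : ∀ᵐ x ∂μ, c x * fderiv ℝ f x v = -(lineDeriv ℝ f x (-v) * c x) := by
    filter_upwards [ae_differentiableAt_of_locallyLipschitz hf] with x hx
    rw [hx.lineDeriv_eq_fderiv, map_neg]
    ring
  rw [integral_congr_ae hderiv, integral_neg, ← hc.integral_lineDeriv_mul_eq hL hfc v]
  simp [lineDeriv, hcv]

lemma integrable_fderiv_add_smul (hf : LocallyLipschitz f) (hfc : HasCompactSupport f)
    (ℓ : E →L[ℝ] ℝ) (v w : E) : Integrable (fun x ↦ fderiv ℝ f x (v + ℓ x • w)) μ := by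
  simpa [Pi.add_def] using (integrable_mul_fderiv_apply hf hfc continuous_one v).add
    (integrable_mul_fderiv_apply hf hfc ℓ.continuous w)

lemma integral_fderiv_add_smul_eq_zero (hf : LocallyLipschitz f) (hfc : HasCompactSupport f)
    {ℓ : E →L[ℝ] ℝ} {w : E} (hℓ : ℓ w = 0) (v : E) :
    ∫ x, fderiv ℝ f x (v + ℓ x • w) ∂μ = 0 := by
  have hv : ∫ x, 1 * fderiv ℝ f x v ∂μ = 0 :=
    integral_mul_fderiv_apply_eq_zero hf hfc (LipschitzWith.const 1) fun _ _ ↦ rfl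
  have hw : ∫ x, ℓ x * fderiv ℝ f x w ∂μ = 0 :=
    integral_mul_fderiv_apply_eq_zero hf hfc ℓ.lipschitz fun x t ↦ by simp [hℓ]
  simp only [one_mul] at hv
  simp only [map_add, map_smul, smul_eq_mul]
  rw [integral_add, hv, hw, add_zero]
  · simpa using integrable_mul_fderiv_apply hf hfc continuous_one v
  · exact integrable_mul_fderiv_apply hf hfc ℓ.continuous w

end IntegrationByParts

lemma lintegral_ofReal_le_of_add_le {X : Type*} [MeasurableSpace X] {μ : Measure X}
    {f h D : X → ℝ} (hD : Integrable D μ) (hD0 : 0 ≤ ∫ x, D x ∂μ) (hf : ∀ x, 0 ≤ f x)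
    (hle : ∀ᵐ x ∂μ, f x + D x ≤ h x) :
    ∫⁻ x, ENNReal.ofReal (f x) ∂μ ≤ ∫⁻ x, ENNReal.ofReal (h x) ∂μ := by
  have hneg : ∫⁻ x, ENNReal.ofReal (-D x) ∂μ ≠ ⊤ := hD.neg.lintegral_lt_top.ne
  have hDD : ∫⁻ x, ENNReal.ofReal (-D x) ∂μ ≤ ∫⁻ x, ENNReal.ofReal (D x) ∂μ := by
    rw [integral_eq_lintegral_pos_part_sub_lintegral_neg_part hD, sub_nonneg] at hD0
    exact (ENNReal.toReal_le_toReal hneg hD.lintegral_lt_top.ne).1 hD0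
  refine (ENNReal.add_le_add_iff_right hneg).1 ?_
  calc ∫⁻ x, ENNReal.ofReal (f x) ∂μ + ∫⁻ x, ENNReal.ofReal (-D x) ∂μ
      ≤ ∫⁻ x, ENNReal.ofReal (f x) ∂μ + ∫⁻ x, ENNReal.ofReal (D x) ∂μ := by gcongr
    _ = ∫⁻ x, ENNReal.ofReal (f x) + ENNReal.ofReal (D x) ∂μ :=
        (lintegral_add_right' _ hD.aemeasurable.ennreal_ofReal).symm
    _ ≤ ∫⁻ x, ENNReal.ofReal (h x) + ENNReal.ofReal (-D x) ∂μ := by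
        refine lintegral_mono_ae ?_
        filter_upwards [hle] with x hx
        rcases le_total 0 (D x) with h0 | h0
        · rw [← ENNReal.ofReal_add (hf x) h0]
          exact (ENNReal.ofReal_le_ofReal hx).trans le_self_add
        · rw [ENNReal.ofReal_of_nonpos h0, add_zero]
          exact (ENNReal.ofReal_le_ofReal (by linarith)).trans ENNReal.ofReal_add_le
    _ = ∫⁻ x, ENNReal.ofReal (h x) ∂μ + ∫⁻ x, ENNReal.ofReal (-D x) ∂μ :=
        lintegral_add_right' _ hD.neg.aemeasurable.ennreal_ofReal

lemma lintegral_le_of_forall_setLIntegral_le {X : Type*} [MeasurableSpace X] {μ : Measure X}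
    (φ : X → ℝ) {F : X → ℝ≥0∞} {C : ℝ≥0∞} (h : ∀ n : ℕ, ∫⁻ x in {x | φ x ≤ n}, F x ∂μ ≤ C) :
    ∫⁻ x, F x ∂μ ≤ C := by
  have hmono : Monotone fun n : ℕ ↦ {x | φ x ≤ n} := fun m n hmn ↦
    Set.ofPred_subset_ofPred.2 fun x hx ↦ hx.trans (Nat.cast_le.2 hmn)
  have hcover : ⋃ n : ℕ, {x | φ x ≤ n} = Set.univ :=
    Set.iUnion_eq_univ_iff.2 fun x ↦ exists_nat_ge (φ x)
  rw [← setLIntegral_univ, ← hcover, setLIntegral_iUnion_of_directed _ hmono.directed_le]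
  exact iSup_le h

section Young

lemma rpow_sub_two_mul_sq {a q : ℝ} (ha : 0 ≤ a) (hq : 2 ≤ q) : a ^ (q - 2) * a ^ 2 = a ^ q := by
  rw [← Real.rpow_two, ← Real.rpow_add_of_nonneg ha (by linarith) zero_le_two, sub_add_cancel]

lemma rpow_sub_two_mul_sq_le {a b q : ℝ} (ha : 0 ≤ a) (hb : 0 ≤ b) (hq : 2 ≤ q) :
    a ^ (q - 2) * b ^ 2 ≤ b ^ q + a ^ q := by
  have : 0 ≤ q - 2 := by linarith
  rcases le_total a b with hab | hab
  · calc a ^ (q - 2) * b ^ 2 ≤ b ^ (q - 2) * b ^ 2 := by gcongr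
      _ = b ^ q := rpow_sub_two_mul_sq hb hq
      _ ≤ b ^ q + a ^ q := le_add_of_nonneg_right (by positivity)
  · calc a ^ (q - 2) * b ^ 2 ≤ a ^ (q - 2) * a ^ 2 := by gcongr
      _ = a ^ q := rpow_sub_two_mul_sq ha hq
      _ ≤ b ^ q + a ^ q := le_add_of_nonneg_left (by positivity)

lemma mul_sub_mul_sq_le {κ : ℝ} (hκ : 0 < κ) (b z : ℝ) :
    b * z - κ / 2 * z ^ 2 ≤ b ^ 2 / (2 * κ) := by
  rw [le_div_iff₀ (by positivity)]
  nlinarith [sq_nonneg (κ * z - b)]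

lemma young_rpow_sub_two {a b z κ c m q : ℝ} (ha : 0 ≤ a) (hb : 0 ≤ b) (hκ : 0 < κ) (hq : 2 ≤ q) :
    a ^ (q - 2) * (m * a * b * z + a ^ 2 * (c * z - κ * z ^ 2)) ≤
      (m ^ 2 + c ^ 2) / (2 * κ) * (b ^ q + a ^ q) := by
  have hm := mul_sub_mul_sq_le hκ (m * b) (a * z)
  have hc := mul_sub_mul_sq_le hκ (c * a) (a * z)
  calc a ^ (q - 2) * (m * a * b * z + a ^ 2 * (c * z - κ * z ^ 2))
      ≤ a ^ (q - 2) * ((m * b) ^ 2 / (2 * κ) + (c * a) ^ 2 / (2 * κ)) := by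
        refine mul_le_mul_of_nonneg_left ?_ (by positivity)
        linarith
    _ = m ^ 2 / (2 * κ) * (a ^ (q - 2) * b ^ 2) + c ^ 2 / (2 * κ) * a ^ q := by
        rw [← rpow_sub_two_mul_sq ha hq]
        ring
    _ ≤ m ^ 2 / (2 * κ) * (b ^ q + a ^ q) + c ^ 2 / (2 * κ) * (b ^ q + a ^ q) := by
        gcongr
        · exact rpow_sub_two_mul_sq_le ha hb hq
        · exact le_add_of_nonneg_left (by positivity)
    _ = (m ^ 2 + c ^ 2) / (2 * κ) * (b ^ q + a ^ q) := by ring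

end Young

section SubGradient

lemma X1_eq_fderiv (f : Spin3 → ℝ) (x : Spin3) :
    X1 f x = fderiv ℝ f x (Pi.single 0 1 + (2 * x 1) • Pi.single 2 1) := by
  rw [X1, map_add, map_smul, smul_eq_mul]

lemma X2_eq_fderiv (f : Spin3 → ℝ) (x : Spin3) :
    X2 f x = fderiv ℝ f x (Pi.single 1 1 + (-2 * x 0) • Pi.single 2 1) := by
  rw [X2, map_add, map_smul, smul_eq_mul, neg_mul, neg_mul, sub_eq_add_neg]

/-- The Heisenberg sub-gradient `∇f = (X¹f, X²f)`. -/
def subGrad (f : Spin3 → ℝ) (x : Spin3) : EuclideanSpace ℝ (Fin 2) := !₂[X1 f x, X2 f x]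

/-- The horizontal divergence `X¹V₁ + X²V₂`, minus the formal adjoint of `subGrad`. -/
def subDiv (V : Spin3 → EuclideanSpace ℝ (Fin 2)) (x : Spin3) : ℝ :=
  X1 (fun y ↦ V y 0) x + X2 (fun y ↦ V y 1) x

lemma norm_subGrad (f : Spin3 → ℝ) (x : Spin3) : ‖subGrad f x‖ = hGrad f x := by
  simp [EuclideanSpace.norm_eq, Fin.sum_univ_two, subGrad, hGrad]

lemma subGrad_comp {f : Spin3 → ℝ} {x : Spin3} {h : ℝ → ℝ} {h' : ℝ}
    (hh : HasDerivAt h h' (f x)) (hf : DifferentiableAt ℝ f x) :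
    subGrad (fun y ↦ h (f y)) x = h' • subGrad f x := by
  have hfderiv : fderiv ℝ (fun y ↦ h (f y)) x = h' • fderiv ℝ f x :=
    (hh.comp_hasFDerivAt x hf.hasFDerivAt).fderiv
  ext i
  fin_cases i <;> simp [subGrad, X1_eq_fderiv, X2_eq_fderiv, hfderiv]

lemma subDiv_sub {V W : Spin3 → EuclideanSpace ℝ (Fin 2)} {x : Spin3}
    (hV : DifferentiableAt ℝ V x) (hW : DifferentiableAt ℝ W x) :
    subDiv (fun y ↦ V y - W y) x = subDiv V x - subDiv W x := by
  rw [differentiableAt_euclidean] at hV hW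
  simp only [subDiv, X1_eq_fderiv, X2_eq_fderiv, PiLp.sub_apply, fderiv_fun_sub (hV _) (hW _),
    sub_apply]
  ring

lemma subDiv_smul {f : Spin3 → ℝ} {V : Spin3 → EuclideanSpace ℝ (Fin 2)} {x : Spin3}
    (hf : DifferentiableAt ℝ f x) (hV : DifferentiableAt ℝ V x) :
    subDiv (fun y ↦ f y • V y) x = ⟪subGrad f x, V x⟫ + f x * subDiv V x := by
  rw [differentiableAt_euclidean] at hV
  simp only [subDiv, subGrad, X1_eq_fderiv, X2_eq_fderiv, PiLp.smul_apply, smul_eq_mul,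
    fderiv_fun_mul hf (hV _), PiLp.inner_apply, Fin.sum_univ_two, add_apply, smul_apply,
    RCLike.inner_apply, Real.ringHom_apply, Matrix.cons_val_zero, Matrix.cons_val_one,
    Matrix.cons_val_fin_one]
  ring

section DivergenceTheorem

variable {f : Spin3 → ℝ} {V : Spin3 → EuclideanSpace ℝ (Fin 2)}

lemma integrable_X1 (hf : LocallyLipschitz f) (hc : HasCompactSupport f) : Integrable (X1 f) := by
  rw [funext (X1_eq_fderiv f)]
  exact integrable_fderiv_add_smul hf hc ((2 : ℝ) • (.proj 1 : Spin3 →L[ℝ] ℝ)) _ _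

lemma integrable_X2 (hf : LocallyLipschitz f) (hc : HasCompactSupport f) : Integrable (X2 f) := by
  rw [funext (X2_eq_fderiv f)]
  exact integrable_fderiv_add_smul hf hc ((-2 : ℝ) • (.proj 0 : Spin3 →L[ℝ] ℝ)) _ _

lemma integral_X1_eq_zero (hf : LocallyLipschitz f) (hc : HasCompactSupport f) :
    ∫ x, X1 f x = 0 := by
  simp only [X1_eq_fderiv]
  exact integral_fderiv_add_smul_eq_zero hf hc
    (ℓ := (2 : ℝ) • (.proj 1 : Spin3 →L[ℝ] ℝ)) (by simp) _

lemma integral_X2_eq_zero (hf : LocallyLipschitz f) (hc : HasCompactSupport f) :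
    ∫ x, X2 f x = 0 := by
  simp only [X2_eq_fderiv]
  exact integral_fderiv_add_smul_eq_zero hf hc
    (ℓ := (-2 : ℝ) • (.proj 0 : Spin3 →L[ℝ] ℝ)) (by simp) _

lemma integrable_subDiv (hV : LocallyLipschitz V) (hc : HasCompactSupport V) :
    Integrable (subDiv V) :=
  (integrable_X1 (locallyLipschitz_euclidean_apply hV 0)
    (hasCompactSupport_euclidean_apply hc 0)).add
    (integrable_X2 (locallyLipschitz_euclidean_apply hV 1)
      (hasCompactSupport_euclidean_apply hc 1))

theorem integral_subDiv_eq_zero (hV : LocallyLipschitz V) (hc : HasCompactSupport V) :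
    ∫ x, subDiv V x = 0 := by
  have hV' := locallyLipschitz_euclidean_apply hV
  have hc' := hasCompactSupport_euclidean_apply hc
  simp only [subDiv]
  rw [integral_add (integrable_X1 (hV' 0) (hc' 0)) (integrable_X2 (hV' 1) (hc' 1)),
    integral_X1_eq_zero (hV' 0) (hc' 0), integral_X2_eq_zero (hV' 1) (hc' 1), add_zero]

end DivergenceTheorem

end SubGradient

section Kaplan

/-- The projection `(x₁, x₂)` of `x` to the horizontal plane. -/
def horizontal (x : Spin3) : EuclideanSpace ℝ (Fin 2) := !₂[x 0, x 1]

/-- The polynomial field `N³∇N = ¼∇(N⁴)`, where `N` is the Kaplan norm. -/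
def quarticGrad (x : Spin3) : EuclideanSpace ℝ (Fin 2) :=
  !₂[(x 0 ^ 2 + x 1 ^ 2) * x 0 + 16 * x 2 * x 1, (x 0 ^ 2 + x 1 ^ 2) * x 1 - 16 * x 2 * x 0]

lemma norm_horizontal_sq (x : Spin3) : ‖horizontal x‖ ^ 2 = x 0 ^ 2 + x 1 ^ 2 := by
  simp [EuclideanSpace.norm_sq_eq, Fin.sum_univ_two, horizontal]

lemma norm_quarticGrad_sq (x : Spin3) :
    ‖quarticGrad x‖ ^ 2 = ‖horizontal x‖ ^ 2 * (‖horizontal x‖ ^ 4 + 256 * x 2 ^ 2) := by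
  rw [show ‖horizontal x‖ ^ 4 = (‖horizontal x‖ ^ 2) ^ 2 by ring, norm_horizontal_sq]
  simp only [EuclideanSpace.norm_sq_eq, Fin.sum_univ_two, quarticGrad, Real.norm_eq_abs, sq_abs,
    Matrix.cons_val_zero, Matrix.cons_val_one, Matrix.cons_val_fin_one]
  ring

lemma inner_quarticGrad_horizontal (x : Spin3) :
    ⟪quarticGrad x, horizontal x⟫ = ‖horizontal x‖ ^ 4 := by
  rw [show ‖horizontal x‖ ^ 4 = (‖horizontal x‖ ^ 2) ^ 2 by ring, norm_horizontal_sq]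
  simp only [PiLp.inner_apply, Fin.sum_univ_two, quarticGrad, horizontal, RCLike.inner_apply,
    Real.ringHom_apply, Matrix.cons_val_zero, Matrix.cons_val_one, Matrix.cons_val_fin_one]
  ring

lemma kaplan_nonneg (x : Spin3) : 0 ≤ kaplan x := by
  unfold kaplan
  positivity

lemma kaplan_pow_four (x : Spin3) : kaplan x ^ 4 = ‖horizontal x‖ ^ 4 + 16 * x 2 ^ 2 := by
  rw [show ‖horizontal x‖ ^ 4 = (‖horizontal x‖ ^ 2) ^ 2 by ring, norm_horizontal_sq, kaplan,
    ← Real.rpow_natCast, ← Real.rpow_mul (by positivity)]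
  norm_num

lemma continuous_kaplan : Continuous kaplan :=
  Continuous.rpow_const (by fun_prop) fun _ ↦ Or.inr (by norm_num)

lemma contDiffAt_kaplan {x : Spin3} (hx : 0 < kaplan x) : ContDiffAt ℝ 1 kaplan x := by
  have hne : (x 0 ^ 2 + x 1 ^ 2) ^ 2 + 16 * x 2 ^ 2 ≠ 0 := by
    intro h
    simp [kaplan, h] at hx
  unfold kaplan
  exact ContDiffAt.rpow_const_of_ne (by fun_prop) hne

lemma subGrad_quartic (x : Spin3) :
    subGrad (fun y ↦ (y 0 ^ 2 + y 1 ^ 2) ^ 2 + 16 * y 2 ^ 2) x = (4 : ℝ) • quarticGrad x := by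
  ext i
  fin_cases i
  all_goals
    simp (disch := fun_prop) [subGrad, X1, X2, quarticGrad, fderiv_fun_add, fderiv_fun_pow,
      fderiv_fun_mul, fderiv_apply, Pi.single_apply]
    ring

lemma subGrad_kaplan {x : Spin3} (hx : 0 < kaplan x) :
    subGrad kaplan x = (kaplan x ^ 3)⁻¹ • quarticGrad x := by
  have hchain : subGrad (fun y ↦ kaplan y ^ 4) x = (4 * kaplan x ^ 3) • subGrad kaplan x :=
    subGrad_comp (by simpa using hasDerivAt_pow 4 (kaplan x))
      ((contDiffAt_kaplan hx).differentiableAt one_ne_zero)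
  have hquartic : subGrad (fun y ↦ kaplan y ^ 4) x = (4 : ℝ) • quarticGrad x := by
    have hpoly : (fun y ↦ kaplan y ^ 4) = fun y ↦ (y 0 ^ 2 + y 1 ^ 2) ^ 2 + 16 * y 2 ^ 2 := by
      ext y
      rw [kaplan_pow_four, ← norm_horizontal_sq]
      ring
    rw [hpoly, subGrad_quartic]
  rw [hchain] at hquartic
  rw [eq_inv_smul_iff₀ (by positivity)]
  refine smul_right_injective _ (four_ne_zero (α := ℝ)) ?_
  simpa [smul_smul] using hquartic

lemma subDiv_horizontal (x : Spin3) : subDiv horizontal x = 2 := by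
  simp [subDiv, horizontal, X1, X2, fderiv_apply, one_add_one_eq_two]

lemma subDiv_quarticGrad (x : Spin3) : subDiv quarticGrad x = 36 * ‖horizontal x‖ ^ 2 := by
  rw [norm_horizontal_sq]
  simp (disch := fun_prop) [subDiv, quarticGrad, X1, X2, fderiv_fun_add, fderiv_fun_sub,
    fderiv_fun_pow, fderiv_fun_mul, fderiv_apply, Pi.single_apply]
  ring

lemma norm_horizontal_le_kaplan (x : Spin3) : ‖horizontal x‖ ≤ kaplan x := by
  refine le_of_pow_le_pow_left₀ four_ne_zero (kaplan_nonneg x) ?_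
  rw [kaplan_pow_four]
  exact le_add_of_nonneg_right (by positivity)

lemma norm_horizontal_sq_div_kaplan_sq_le {x : Spin3} (hx : 1 ≤ kaplan x) :
    ‖horizontal x‖ ^ 2 / kaplan x ^ 2 ≤ ‖horizontal x‖ := by
  rw [div_le_iff₀ (by positivity), sq]
  gcongr
  exact (norm_horizontal_le_kaplan x).trans (le_self_pow₀ hx two_ne_zero)

lemma isCompact_setOf_kaplan_le (R : ℝ) : IsCompact {x | kaplan x ≤ R} := by
  refine (isCompact_closedBall (0 : Spin3) (R + R ^ 2)).of_isClosed_subset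
    (isClosed_le continuous_kaplan continuous_const) fun x (hx : kaplan x ≤ R) ↦ ?_
  have hR : 0 ≤ R := (kaplan_nonneg x).trans hx
  have hquartic : (x 0 ^ 2 + x 1 ^ 2) ^ 2 + 16 * x 2 ^ 2 ≤ R ^ 4 := by
    rw [← norm_horizontal_sq, ← pow_mul, ← kaplan_pow_four]
    exact pow_le_pow_left₀ (kaplan_nonneg x) hx 4
  have hplane : x 0 ^ 2 + x 1 ^ 2 ≤ R ^ 2 :=
    abs_le_of_sq_le_sq' (by nlinarith) (sq_nonneg R) |>.2
  rw [mem_closedBall_zero_iff, pi_norm_le_iff_of_nonneg (by positivity)]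
  have h0 : |x 0| ≤ R := abs_le_of_sq_le_sq (by nlinarith) hR
  have h1 : |x 1| ≤ R := abs_le_of_sq_le_sq (by nlinarith) hR
  have h2 : |x 2| ≤ R ^ 2 := abs_le_of_sq_le_sq (by nlinarith) (sq_nonneg R)
  simp only [Fin.forall_fin_succ, Fin.succ_zero_eq_one, Fin.succ_one_eq_two, Real.norm_eq_abs]
  exact ⟨by nlinarith, by nlinarith, by nlinarith, fun i ↦ i.elim0⟩

lemma norm_quarticGrad_sq_le (x : Spin3) :
    ‖quarticGrad x‖ ^ 2 ≤ 16 * (‖horizontal x‖ ^ 2 * kaplan x ^ 4) := by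
  rw [norm_quarticGrad_sq, kaplan_pow_four, mul_left_comm]
  gcongr
  nlinarith [sq_nonneg (‖horizontal x‖ ^ 2)]

lemma le_norm_quarticGrad_sq (x : Spin3) :
    ‖horizontal x‖ ^ 2 * kaplan x ^ 4 ≤ ‖quarticGrad x‖ ^ 2 := by
  rw [norm_quarticGrad_sq, kaplan_pow_four]
  gcongr
  norm_num

/-- The horizontal field `U = ∇(N²) − (x₁, x₂)`. It is transversal to the level sets of `N` away
from the vertical axis, and its divergence tends to `-2` at that axis, where `∇N` vanishes. -/
def kaplanField (x : Spin3) : EuclideanSpace ℝ (Fin 2) :=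
  (2 / kaplan x ^ 2) • quarticGrad x - horizontal x

lemma norm_kaplanField_le (x : Spin3) : ‖kaplanField x‖ ≤ 9 * ‖horizontal x‖ := by
  have hA : ‖quarticGrad x‖ ≤ 4 * ‖horizontal x‖ * kaplan x ^ 2 := by
    refine le_of_sq_le_sq ?_ (by positivity)
    linarith [norm_quarticGrad_sq_le x]
  have hscaled : ‖(2 / kaplan x ^ 2) • quarticGrad x‖ ≤ 8 * ‖horizontal x‖ := by
    rw [norm_smul, Real.norm_of_nonneg (by positivity), div_mul_eq_mul_div]
    exact div_le_of_le_mul₀ (by positivity) (by positivity) (by linarith)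
  exact (norm_sub_le _ _).trans (by linarith)

lemma contDiff_horizontal : ContDiff ℝ 1 horizontal := by
  rw [contDiff_euclidean, Fin.forall_fin_two]
  simp only [horizontal, Matrix.cons_val_zero, Matrix.cons_val_one]
  constructor <;> fun_prop

lemma contDiff_quarticGrad : ContDiff ℝ 1 quarticGrad := by
  rw [contDiff_euclidean, Fin.forall_fin_two]
  simp only [quarticGrad, Matrix.cons_val_zero, Matrix.cons_val_one]
  constructor <;> fun_prop

section PositiveKaplan

variable {x : Spin3}

lemma contDiffAt_kaplanField (hx : 0 < kaplan x) : ContDiffAt ℝ 1 kaplanField x := by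
  have hN := contDiffAt_kaplan hx
  exact ((contDiffAt_const.div (hN.pow 2) (by positivity)).smul contDiff_quarticGrad.contDiffAt).sub
    contDiff_horizontal.contDiffAt

lemma inner_subGrad_kaplan_kaplanField (hx : 0 < kaplan x) :
    ⟪subGrad kaplan x, kaplanField x⟫ =
      2 * ‖quarticGrad x‖ ^ 2 / kaplan x ^ 5 - ‖horizontal x‖ ^ 4 / kaplan x ^ 3 := by
  rw [subGrad_kaplan hx, kaplanField, inner_sub_right, real_inner_smul_left, real_inner_smul_left,
    real_inner_smul_right, real_inner_self_eq_norm_sq, inner_quarticGrad_horizontal]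
  field_simp

lemma inner_subGrad_kaplan_kaplanField_le (hx : 0 < kaplan x) :
    ⟪subGrad kaplan x, kaplanField x⟫ ≤ 32 * ‖horizontal x‖ ^ 2 / kaplan x := by
  rw [inner_subGrad_kaplan_kaplanField hx]
  refine (sub_le_self _ (by positivity)).trans ?_
  rw [div_le_div_iff₀ (by positivity) hx]
  nlinarith [mul_le_mul_of_nonneg_right (norm_quarticGrad_sq_le x) hx.le]

lemma le_inner_subGrad_kaplan_kaplanField (hx : 0 < kaplan x) :
    ‖horizontal x‖ ^ 2 / kaplan x ≤ ⟪subGrad kaplan x, kaplanField x⟫ := by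
  rw [inner_subGrad_kaplan_kaplanField hx]
  have hA : 2 * (‖horizontal x‖ ^ 2 / kaplan x) ≤ 2 * ‖quarticGrad x‖ ^ 2 / kaplan x ^ 5 := by
    rw [← mul_div_assoc, div_le_div_iff₀ hx (by positivity)]
    nlinarith [mul_le_mul_of_nonneg_right (le_norm_quarticGrad_sq x) hx.le]
  have hr : ‖horizontal x‖ ^ 4 / kaplan x ^ 3 ≤ ‖horizontal x‖ ^ 2 / kaplan x := by
    rw [div_le_div_iff₀ (by positivity) hx]
    have : ‖horizontal x‖ ^ 2 ≤ kaplan x ^ 2 := by gcongr; exact norm_horizontal_le_kaplan x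
    nlinarith [mul_le_mul_of_nonneg_left this (by positivity : 0 ≤ ‖horizontal x‖ ^ 2 * kaplan x)]
  linarith

lemma subDiv_kaplanField_le (hx : 0 < kaplan x) :
    subDiv kaplanField x ≤ 72 * (‖horizontal x‖ ^ 2 / kaplan x ^ 2) - 2 := by
  have hN : DifferentiableAt ℝ kaplan x := (contDiffAt_kaplan hx).differentiableAt one_ne_zero
  have hA := contDiff_quarticGrad.contDiffAt.differentiableAt (x := x) one_ne_zero
  have hh := contDiff_horizontal.contDiffAt.differentiableAt (x := x) one_ne_zero
  have hinv : HasDerivAt (fun ν : ℝ ↦ 2 / ν ^ 2) (-4 / kaplan x ^ 3) (kaplan x) := by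
    refine ((hasDerivAt_const _ 2).div (hasDerivAt_pow 2 _) (by positivity)).congr_deriv ?_
    field_simp
    norm_num [mul_comm]
  have hdiff : DifferentiableAt ℝ (fun y ↦ 2 / kaplan y ^ 2) x :=
    hinv.differentiableAt.comp x hN
  have hdiv : subDiv kaplanField x = 72 * (‖horizontal x‖ ^ 2 / kaplan x ^ 2) - 2 -
      4 * ‖quarticGrad x‖ ^ 2 / kaplan x ^ 6 := by
    unfold kaplanField
    rw [subDiv_sub (hdiff.fun_smul hA) hh, subDiv_smul hdiff hA, subGrad_comp hinv hN,
      subGrad_kaplan hx, subDiv_quarticGrad, subDiv_horizontal, real_inner_smul_left,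
      real_inner_smul_left, real_inner_self_eq_norm_sq]
    field_simp
    ring
  rw [hdiv]
  exact sub_le_self _ (by positivity)

end PositiveKaplan

end Kaplan

section WeightedField

/-- Radial densities `w(N)` for which the U-bound argument works: `w` decays at least at the
logarithmic rate `κ ν^(p-1)` of `exp (-κ ν^p / p)`. An inequality, so that cut-offs of the
exponential density qualify too. -/
structure IsDecayingWeight (κ p : ℝ) (w : ℝ → ℝ) : Prop where
  nonneg : ∀ ν, 0 ≤ w ν
  contDiffAt : ∀ ν, 0 < ν → ContDiffAt ℝ 1 w ν
  deriv_le : ∀ ν, 0 < ν → deriv w ν ≤ -(κ * ν ^ (p - 1) * w ν)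

/-- The field `w(N) N^(p-2) U` against which `|g|^q` is integrated by parts. -/
def weightedField (p : ℝ) (w : ℝ → ℝ) (x : Spin3) : EuclideanSpace ℝ (Fin 2) :=
  (kaplan x ^ (p - 2) * w (kaplan x)) • kaplanField x

variable {κ p : ℝ} {w : ℝ → ℝ} {x : Spin3}

lemma contDiffAt_weightedField (hw : IsDecayingWeight κ p w) (hx : 0 < kaplan x) :
    ContDiffAt ℝ 1 (weightedField p w) x :=
  have hN := contDiffAt_kaplan hx
  ((hN.rpow_const_of_ne hx.ne').mul ((hw.contDiffAt _ hx).comp x hN)).smul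
    (contDiffAt_kaplanField hx)

lemma norm_weightedField_le (hw : IsDecayingWeight κ p w) (x : Spin3) :
    ‖weightedField p w x‖ ≤ 9 * (kaplan x ^ (p - 2) * ‖horizontal x‖) * w (kaplan x) := by
  have hψ : 0 ≤ kaplan x ^ (p - 2) * w (kaplan x) :=
    mul_nonneg (Real.rpow_nonneg (kaplan_nonneg x) _) (hw.nonneg _)
  rw [weightedField, norm_smul, Real.norm_of_nonneg hψ]
  linarith [mul_le_mul_of_nonneg_left (norm_kaplanField_le x) hψ]

lemma subDiv_weightedField (hw : IsDecayingWeight κ p w) (hx : 0 < kaplan x) :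
    subDiv (weightedField p w) x =
      kaplan x ^ (p - 2) * (((p - 2) / kaplan x * w (kaplan x) + deriv w (kaplan x)) *
        ⟪subGrad kaplan x, kaplanField x⟫ + w (kaplan x) * subDiv kaplanField x) := by
  have hN : DifferentiableAt ℝ kaplan x := (contDiffAt_kaplan hx).differentiableAt one_ne_zero
  have hw' : HasDerivAt w (deriv w (kaplan x)) (kaplan x) :=
    ((hw.contDiffAt _ hx).differentiableAt one_ne_zero).hasDerivAt
  have hψ := (Real.hasDerivAt_rpow_const (p := p - 2) (Or.inl hx.ne')).fun_mul hw'
  have hdiff : DifferentiableAt ℝ (fun y ↦ kaplan y ^ (p - 2) * w (kaplan y)) x :=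
    hψ.differentiableAt.comp x hN
  unfold weightedField
  rw [subDiv_smul hdiff ((contDiffAt_kaplanField hx).differentiableAt one_ne_zero),
    subGrad_comp hψ hN, real_inner_smul_left, Real.rpow_sub_one hx.ne']
  ring

lemma subDiv_weightedField_le (hw : IsDecayingWeight κ p w) (hκ : 0 ≤ κ) (hx : 1 ≤ kaplan x) :
    subDiv (weightedField p w) x ≤
      ((32 * |p - 2| + 72) * (kaplan x ^ (p - 2) * ‖horizontal x‖) -
        κ * (kaplan x ^ (p - 2) * ‖horizontal x‖) ^ 2 - 2 * kaplan x ^ (p - 2)) *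
          w (kaplan x) := by
  have hN : 0 < kaplan x := by linarith
  rw [subDiv_weightedField hw hN]
  have hw0 := hw.nonneg (kaplan x)
  set s := kaplan x ^ (p - 2)
  set I := ⟪subGrad kaplan x, kaplanField x⟫
  have hs : 0 ≤ s := by positivity
  have hlower : ‖horizontal x‖ ^ 2 / kaplan x ≤ I := le_inner_subGrad_kaplan_kaplanField hN
  have hI : 0 ≤ I := le_trans (by positivity) hlower
  have hr := norm_horizontal_sq_div_kaplan_sq_le hx
  have hdecay : deriv w (kaplan x) * I ≤ -(κ * s * w (kaplan x) * ‖horizontal x‖ ^ 2) := by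
    have hw' := hw.deriv_le _ hN
    rw [show p - 1 = p - 2 + 1 by ring, Real.rpow_add_one hN.ne'] at hw'
    calc deriv w (kaplan x) * I ≤ -(κ * (s * kaplan x) * w (kaplan x)) * I := by gcongr
      _ ≤ -(κ * (s * kaplan x) * w (kaplan x)) * (‖horizontal x‖ ^ 2 / kaplan x) :=
        mul_le_mul_of_nonpos_left hlower (neg_nonpos.2 (by positivity))
      _ = -(κ * s * w (kaplan x) * ‖horizontal x‖ ^ 2) := by field_simp
  have hpower : (p - 2) / kaplan x * I ≤ 32 * |p - 2| * ‖horizontal x‖ :=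
    calc (p - 2) / kaplan x * I
        ≤ |p - 2| / kaplan x * (32 * ‖horizontal x‖ ^ 2 / kaplan x) := by
          gcongr
          · exact le_abs_self _
          · exact inner_subGrad_kaplan_kaplanField_le hN
      _ = 32 * |p - 2| * (‖horizontal x‖ ^ 2 / kaplan x ^ 2) := by field_simp
      _ ≤ 32 * |p - 2| * ‖horizontal x‖ := by gcongr
  have hdiv : subDiv kaplanField x ≤ 72 * ‖horizontal x‖ - 2 := by
    linarith [subDiv_kaplanField_le hN]
  linarith [mul_le_mul_of_nonneg_left hdecay hs,
    mul_le_mul_of_nonneg_left hpower (mul_nonneg hs hw0),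
    mul_le_mul_of_nonneg_left hdiv (mul_nonneg hs hw0)]

end WeightedField

section WeightedInequality

variable {κ p q R : ℝ} {w : ℝ → ℝ} {g : Spin3 → ℝ}

lemma tsupport_abs_rpow_subset (hq : q ≠ 0) (hg : ∀ x, kaplan x < 1 → g x = 0) :
    tsupport (fun x ↦ |g x| ^ q) ⊆ {x | 1 ≤ kaplan x} := by
  refine closure_minimal (fun x hx ↦ ?_) (isClosed_le continuous_const continuous_kaplan)
  by_contra hlt
  exact hx (by simp [hg x (not_le.1 hlt), hq])

lemma locallyLipschitz_abs_rpow_smul_weightedField (hw : IsDecayingWeight κ p w) (hq : 1 < q)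
    (hg : LocallyLipschitz g) (hg0 : ∀ x, kaplan x < 1 → g x = 0) :
    LocallyLipschitz fun x ↦ |g x| ^ q • weightedField p w x := by
  have hpow : LocallyLipschitz fun x ↦ |g x| ^ q :=
    (contDiff_norm_rpow (E := ℝ) hq).locallyLipschitz.comp hg
  refine locallyLipschitz_smul_of_contDiffAt hpow fun x hx ↦ contDiffAt_weightedField hw ?_
  exact zero_lt_one.trans_le (tsupport_abs_rpow_subset (by positivity) hg0 hx)

lemma hasCompactSupport_smul_weightedField (hR : ∀ ν, R < ν → w ν = 0) (f : Spin3 → ℝ) :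
    HasCompactSupport fun x ↦ f x • weightedField p w x :=
  .intro (isCompact_setOf_kaplan_le R) fun x hx ↦ by
    simp [weightedField, hR _ (not_le.1 hx)]

lemma subDiv_eq_zero_of_notMem_tsupport {V : Spin3 → EuclideanSpace ℝ (Fin 2)} {x : Spin3}
    (hx : x ∉ tsupport V) : subDiv V x = 0 := by
  have hV (i : Fin 2) : fderiv ℝ (fun y ↦ V y i) x = 0 := by
    have hi : (fun y ↦ V y i) =ᶠ[nhds x] fun _ ↦ 0 :=
      (notMem_tsupport_iff_eventuallyEq.1 hx).mono fun y hy ↦ by simp [hy]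
    rw [hi.fderiv_eq, fderiv_const_apply]
  simp [subDiv, X1, X2, hV]

lemma subDiv_abs_rpow_smul_le {V : Spin3 → EuclideanSpace ℝ (Fin 2)} {x : Spin3} (hq : 2 ≤ q)
    (hg : DifferentiableAt ℝ g x) (hV : DifferentiableAt ℝ V x) :
    subDiv (fun y ↦ |g y| ^ q • V y) x ≤
      |g x| ^ (q - 2) * (q * |g x| * hGrad g x * ‖V x‖ + |g x| ^ 2 * subDiv V x) := by
  have hpow := hasDerivAt_abs_rpow (g x) (by linarith : 1 < q)
  have hdiff : DifferentiableAt ℝ (fun y ↦ |g y| ^ q) x := hpow.differentiableAt.comp x hg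
  rw [subDiv_smul hdiff hV, subGrad_comp hpow hg, real_inner_smul_left,
    ← rpow_sub_two_mul_sq (abs_nonneg _) hq]
  have hinner : g x * ⟪subGrad g x, V x⟫ ≤ |g x| * (hGrad g x * ‖V x‖) := by
    rw [← norm_subGrad]
    calc g x * ⟪subGrad g x, V x⟫ ≤ |g x| * |⟪subGrad g x, V x⟫| := by
          rw [← abs_mul]
          exact le_abs_self _
      _ ≤ |g x| * (‖subGrad g x‖ * ‖V x‖) := by
          gcongr
          exact abs_real_inner_le_norm _ _
  have hk : 0 ≤ q * |g x| ^ (q - 2) := by positivity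
  linarith [mul_le_mul_of_nonneg_left hinner hk]

/-- The constant `C` of the weighted inequality, in terms of the decay rate `κ` of the weight. -/
def uBoundConst (κ p q : ℝ) : ℝ := ((9 * q) ^ 2 + (32 * |p - 2| + 72) ^ 2) / (2 * κ)

lemma uBoundConst_pos (hκ : 0 < κ) : 0 < uBoundConst κ p q := by
  unfold uBoundConst
  positivity

lemma add_subDiv_abs_rpow_smul_weightedField_le (hw : IsDecayingWeight κ p w) (hκ : 0 < κ)
    (hq : 2 ≤ q) {x : Spin3} (hx : 1 ≤ kaplan x) (hg : DifferentiableAt ℝ g x) :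
    |g x| ^ q * kaplan x ^ (p - 2) * w (kaplan x) +
        subDiv (fun y ↦ |g y| ^ q • weightedField p w y) x ≤
      uBoundConst κ p q * ((hGrad g x ^ q + |g x| ^ q) * w (kaplan x)) := by
  have hw0 := hw.nonneg (kaplan x)
  have hgrad : 0 ≤ hGrad g x := Real.sqrt_nonneg _
  have : 0 ≤ kaplan x ^ (p - 2) := Real.rpow_nonneg (kaplan_nonneg x) _
  have hV := (contDiffAt_weightedField hw (zero_lt_one.trans_le hx)).differentiableAt one_ne_zero
  set z := kaplan x ^ (p - 2) * ‖horizontal x‖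
  set c := 32 * |p - 2| + 72
  have hfield : subDiv (fun y ↦ |g y| ^ q • weightedField p w y) x ≤
      |g x| ^ (q - 2) * (q * |g x| * hGrad g x * (9 * z * w (kaplan x)) +
        |g x| ^ 2 * ((c * z - κ * z ^ 2 - 2 * kaplan x ^ (p - 2)) * w (kaplan x))) := by
    refine (subDiv_abs_rpow_smul_le hq hg hV).trans ?_
    gcongr
    · exact norm_weightedField_le hw x
    · exact subDiv_weightedField_le hw hκ.le hx
  have hyoung := young_rpow_sub_two (z := z) (c := c) (m := 9 * q) (abs_nonneg (g x)) hgrad hκ hq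
  rw [← rpow_sub_two_mul_sq (abs_nonneg _) hq] at hyoung ⊢
  have hnonneg : 0 ≤ |g x| ^ (q - 2) * |g x| ^ 2 * kaplan x ^ (p - 2) * w (kaplan x) := by
    positivity
  unfold uBoundConst
  linarith [mul_le_mul_of_nonneg_right hyoung hw0]

theorem lintegral_abs_rpow_mul_weight_le (hw : IsDecayingWeight κ p w) (hκ : 0 < κ)
    (hR : ∀ ν, R < ν → w ν = 0) (hq : 2 ≤ q) (hg : LocallyLipschitz g)
    (hg0 : ∀ x, kaplan x < 1 → g x = 0) :
    ∫⁻ x, ENNReal.ofReal (|g x| ^ q * kaplan x ^ (p - 2) * w (kaplan x)) ≤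
      ENNReal.ofReal (uBoundConst κ p q) *
        ∫⁻ x, ENNReal.ofReal ((hGrad g x ^ q + |g x| ^ q) * w (kaplan x)) := by
  have hC : 0 < uBoundConst κ p q := uBoundConst_pos hκ
  have hLip := locallyLipschitz_abs_rpow_smul_weightedField hw (by linarith : 1 < q) hg hg0
  have hsupp : HasCompactSupport fun x ↦ |g x| ^ q • weightedField p w x :=
    hasCompactSupport_smul_weightedField hR _
  rw [← lintegral_const_mul' _ _ ENNReal.ofReal_ne_top]
  simp only [← ENNReal.ofReal_mul hC.le]
  refine lintegral_ofReal_le_of_add_le (integrable_subDiv hLip hsupp)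
    (integral_subDiv_eq_zero hLip hsupp).ge (fun x ↦ ?_) ?_
  · have := hw.nonneg (kaplan x)
    have := kaplan_nonneg x
    positivity
  filter_upwards [ae_differentiableAt_of_locallyLipschitz hg] with x hx
  rcases lt_or_ge (kaplan x) 1 with hlt | hge
  · have hout : x ∉ tsupport fun y ↦ |g y| ^ q • weightedField p w y := fun hmem ↦
      hlt.not_ge (tsupport_abs_rpow_subset (by positivity) hg0 (tsupport_smul_subset_left _ _ hmem))
    rw [subDiv_eq_zero_of_notMem_tsupport hout, hg0 x hlt, abs_zero, Real.zero_rpow (by positivity),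
      zero_mul, zero_mul, add_zero, add_zero]
    have := hw.nonneg (kaplan x)
    have : 0 ≤ hGrad g x := Real.sqrt_nonneg _
    positivity
  · exact add_subDiv_abs_rpow_smul_weightedField_le hw hκ hq hge hx

end WeightedInequality

section CutOff

lemma hasDerivAt_exp_neg_mul_rpow (α p : ℝ) {ν : ℝ} (hν : 0 < ν) :
    HasDerivAt (fun ν ↦ Real.exp (-(α * ν ^ p)))
      (-(α * p * ν ^ (p - 1) * Real.exp (-(α * ν ^ p)))) ν := by
  have hpow := (Real.hasDerivAt_rpow_const (p := p) (Or.inl hν.ne')).const_mul α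
  exact hpow.fun_neg.exp.congr_deriv (by ring)

/-- The density `exp (-α ν^p)`, smoothly cut off between `R` and `R + 1`. -/
def cutOffExp (α p R ν : ℝ) : ℝ := Real.smoothTransition (R + 1 - ν) * Real.exp (-(α * ν ^ p))

lemma cutOffExp_of_le {α p R ν : ℝ} (hν : ν ≤ R) : cutOffExp α p R ν = Real.exp (-(α * ν ^ p)) := by
  rw [cutOffExp, Real.smoothTransition.one_of_one_le (by linarith), one_mul]

lemma cutOffExp_of_gt {α p R ν : ℝ} (hν : R + 1 < ν) : cutOffExp α p R ν = 0 := by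
  rw [cutOffExp, Real.smoothTransition.zero_of_nonpos (by linarith), zero_mul]

lemma cutOffExp_le (α p R ν : ℝ) : cutOffExp α p R ν ≤ Real.exp (-(α * ν ^ p)) :=
  mul_le_of_le_one_left (Real.exp_nonneg _) (Real.smoothTransition.le_one _)

lemma isDecayingWeight_cutOffExp (α p R : ℝ) : IsDecayingWeight (α * p) p (cutOffExp α p R) where
  nonneg ν := mul_nonneg (Real.smoothTransition.nonneg _) (Real.exp_nonneg _)
  contDiffAt ν hν := by
    have : ContDiff ℝ 1 Real.smoothTransition := Real.smoothTransition.contDiff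
    have : ContDiffAt ℝ 1 (fun ν : ℝ ↦ ν ^ p) ν := Real.contDiffAt_rpow_const_of_ne hν.ne'
    unfold cutOffExp
    fun_prop
  deriv_le ν hν := by
    have hS : HasDerivAt (fun ν ↦ Real.smoothTransition (R + 1 - ν))
        (-deriv Real.smoothTransition (R + 1 - ν)) ν := by
      have hdiff := (Real.smoothTransition.contDiff (n := 1)).differentiable one_ne_zero
      exact (hdiff _).hasDerivAt.comp_const_sub _ _
    have hmono := Real.smoothTransition.monotone.deriv_nonneg (x := R + 1 - ν)
    unfold cutOffExp
    rw [(hS.fun_mul (hasDerivAt_exp_neg_mul_rpow α p hν)).deriv]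
    linarith [mul_nonneg hmono (Real.exp_nonneg (-(α * ν ^ p)))]

end CutOff

theorem kaplan_U_bound_general (α p q : ℝ) (hα : 0 < α) (hp : 0 < p) (hq : 2 ≤ q) :
    ∃ C : ℝ, 0 < C ∧
      ∀ g : Spin3 → ℝ, LocallyLipschitz g → (∀ x, kaplan x < 1 → g x = 0) →
        ∫⁻ x, ENNReal.ofReal
            (|g x| ^ q * kaplan x ^ (p - 2) * Real.exp (-(α * kaplan x ^ p))) ≤
          ENNReal.ofReal C *
            ∫⁻ x, ENNReal.ofReal
              ((hGrad g x ^ q + |g x| ^ q) * Real.exp (-(α * kaplan x ^ p))) := by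
  have hκ : 0 < α * p := mul_pos hα hp
  refine ⟨uBoundConst (α * p) p q, uBoundConst_pos hκ, fun g hg hg0 ↦ ?_⟩
  set f : Spin3 → ℝ := fun x ↦ |g x| ^ q * kaplan x ^ (p - 2)
  have hball (n : ℕ) : ∫⁻ x in {x | kaplan x ≤ n},
        ENNReal.ofReal (f x * Real.exp (-(α * kaplan x ^ p))) ≤
      ENNReal.ofReal (uBoundConst (α * p) p q) *
        ∫⁻ x, ENNReal.ofReal ((hGrad g x ^ q + |g x| ^ q) * Real.exp (-(α * kaplan x ^ p))) := by
    calc ∫⁻ x in {x | kaplan x ≤ n}, ENNReal.ofReal (f x * Real.exp (-(α * kaplan x ^ p)))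
        = ∫⁻ x in {x | kaplan x ≤ n}, ENNReal.ofReal (f x * cutOffExp α p n (kaplan x)) :=
          setLIntegral_congr_fun (isCompact_setOf_kaplan_le n).measurableSet fun x hx ↦ by
            rw [cutOffExp_of_le hx]
      _ ≤ ∫⁻ x, ENNReal.ofReal (f x * cutOffExp α p n (kaplan x)) := setLIntegral_le_lintegral _ _
      _ ≤ ENNReal.ofReal (uBoundConst (α * p) p q) * ∫⁻ x,
            ENNReal.ofReal ((hGrad g x ^ q + |g x| ^ q) * cutOffExp α p n (kaplan x)) :=
          lintegral_abs_rpow_mul_weight_le (isDecayingWeight_cutOffExp α p n) hκ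
            (fun ν ↦ cutOffExp_of_gt) hq hg hg0
      _ ≤ _ := by
          gcongr with x
          · have : 0 ≤ hGrad g x := Real.sqrt_nonneg _
            positivity
          · exact cutOffExp_le _ _ _ _
  exact lintegral_le_of_forall_setLIntegral_le kaplan hball

/-- **U-bound for the Kaplan norm** (away from the unit ball). For `α > 0`,
`p, q ≥ 2` there is `C ∈ (0,∞)`, depending only on `α, p, q`, such that for every
locally Lipschitz `g` supported in `{N ≥ 1}`:
`∫ |g|^q N^{p−3} e^{−αN^p} dx ≤ C ∫ (|∇g|^q + |g|^q) e^{−αN^p} dx`. -/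
theorem kaplan_U_bound (α p q : ℝ) (hα : 0 < α) (hp : 2 ≤ p) (hq : 2 ≤ q) :
    ∃ C : ℝ, 0 < C ∧
      ∀ g : Spin3 → ℝ, LocallyLipschitz g → (∀ x, kaplan x < 1 → g x = 0) →
        ∫⁻ x, ENNReal.ofReal
            (|g x| ^ q * kaplan x ^ (p - 3) * Real.exp (-(α * kaplan x ^ p))) ≤
          ENNReal.ofReal C *
            ∫⁻ x, ENNReal.ofReal
              ((hGrad g x ^ q + |g x| ^ q) * Real.exp (-(α * kaplan x ^ p))) := by
  obtain ⟨C, hC, hbound⟩ := kaplan_U_bound_general α p q hα (by linarith) hq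
  refine ⟨C, hC, fun g hg hg0 ↦ le_trans (lintegral_mono fun x ↦ ?_) (hbound g hg hg0)⟩
  rcases lt_or_ge (kaplan x) 1 with hlt | hge
  · simp [hg0 x hlt, Real.zero_rpow (by positivity : q ≠ 0)]
  · gcongr ENNReal.ofReal (_ * ?_ * _)
    exact Real.rpow_le_rpow_of_exponent_le hge (by linarith)
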